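/- Let X be a real Banach space with the Daugavet property. Then every rank-one continuous polynomial satisfies the Daugavet equation: for every continuous scalar polynomial p on X and every y₀ ∈ X, sup_{‖x‖≤1} ‖x + p(x)·y₀‖ = 1 + (sup_{‖x‖≤1} |p(x)|)·‖y₀‖. -/

import Mathlib

/-!
The upper bound is the triangle inequality. For the lower bound, let `‖x₀‖ ≤ 1`, let `q = ± p` be
such that `q x₀ = |p x₀|`, and let `y = ± y₀` accordingly. It suffices to find `z` in the unit ball
with `q z ≥ q x₀ - ε` such that a single functional `g` with `‖g‖ ≤ 1` has `g z ≥ 1 - ε` and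
`g y ≥ ‖y‖ - ε` (`exists_almost_aligned`).

By the Daugavet property, every slice of the unit ball contains points `x` with `‖x + w‖` as close
as desired to `1 + ‖w‖`, for any prescribed `w` (`exists_mem_slice`). Fix a large `n` and take
`z = (x₁ + ⋯ + xₙ) / n`, where the `xᵢ` are chosen successively so that
`‖y + x₁ + ⋯ + xᵢ‖` is almost `‖y‖ + i`; then a functional norming `y + x₁ + ⋯ + xₙ` is almost
norming for `y` and for `z`. Put `zᵢ = x₀ + ∑_{j ≤ i} (xⱼ - x₀) / n`, which lies in the unit ball.
A polynomial has a first-order expansion on the unit ball with a uniform quadratic remainder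
(`IsScalarPoly.hasQuadraticRemainder`), so the step from `zᵢ` to `zᵢ₊₁` changes `q` by
`Dq(zᵢ)(xᵢ₊₁ - x₀) / n + O(1 / n²)`. Choosing `xᵢ₊₁` in a slice defined by the functional `Dq(zᵢ)`
makes the first term almost nonnegative, and the `n` quadratic errors add up to `O(1 / n)`.
Hence `q z ≥ q x₀ - ε`.
-/

/-- A continuous scalar polynomial on a real normed space `X`: a function of the form
`p x = c + ∑_{n=1}^{N} F n (x, …, x)` where each `F n` is a continuous `n`-linear form. -/
def IsScalarPoly {X : Type*} [NormedAddCommGroup X] [NormedSpace ℝ X] (p : X → ℝ) : Prop :=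
  ∃ (N : ℕ) (c : ℝ) (F : (n : ℕ) → ContinuousMultilinearMap ℝ (fun _ : Fin n => X) ℝ),
    ∀ x : X, p x = c + ∑ n ∈ Finset.Icc 1 N, F n (fun _ => x)

/-! ### Uniform first-order expansion of polynomials -/

/-- On the closed unit ball, `q` has a first-order expansion at every point, with remainder bounded
by `C` times the squared distance. The constant is uniform in the base point. -/
def HasQuadraticRemainder {X : Type*} [NormedAddCommGroup X] [NormedSpace ℝ X]
    (q : X → ℝ) (C : ℝ) : Prop :=
  ∀ z : X, ‖z‖ ≤ 1 → ∃ f : X →L[ℝ] ℝ, ∀ z' : X, ‖z'‖ ≤ 1 →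
    |q z' - q z - f (z' - z)| ≤ C * ‖z' - z‖ ^ 2

section

variable {X : Type*} [NormedAddCommGroup X] [NormedSpace ℝ X]

lemma HasQuadraticRemainder.add {q r : X → ℝ} {C D : ℝ} (hq : HasQuadraticRemainder q C)
    (hr : HasQuadraticRemainder r D) :
    HasQuadraticRemainder (fun x => q x + r x) (C + D) := by
  intro z hz
  obtain ⟨f, hf⟩ := hq z hz
  obtain ⟨g, hg⟩ := hr z hz
  refine ⟨f + g, fun z' hz' => ?_⟩
  have h1 := abs_le.1 (hf z' hz')
  have h2 := abs_le.1 (hg z' hz')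
  rw [_root_.add_apply, abs_le]
  constructor <;> linarith

lemma HasQuadraticRemainder.neg {q : X → ℝ} {C : ℝ} (hq : HasQuadraticRemainder q C) :
    HasQuadraticRemainder (fun x => -q x) C := by
  intro z hz
  obtain ⟨f, hf⟩ := hq z hz
  refine ⟨-f, fun z' hz' => ?_⟩
  have h1 := abs_le.1 (hf z' hz')
  rw [_root_.neg_apply, abs_le]
  constructor <;> linarith

lemma hasQuadraticRemainder_const (c : ℝ) : HasQuadraticRemainder (fun _ : X => c) 0 :=
  fun _ _ => ⟨0, fun _ _ => by simp⟩

lemma HasQuadraticRemainder.exists_bound {q : X → ℝ} {C : ℝ} (hC : 0 ≤ C)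
    (hq : HasQuadraticRemainder q C) : ∃ M, ∀ x, ‖x‖ ≤ 1 → |q x| ≤ M := by
  obtain ⟨f, hf⟩ := hq 0 (by simp)
  refine ⟨|q 0| + ‖f‖ + C, fun x hx => ?_⟩
  have h1 := abs_le.1 (hf x hx)
  have h2 := abs_le.1 ((f.le_opNorm x).trans (mul_le_of_le_one_right (norm_nonneg f) hx))
  have h3 : C * ‖x‖ ^ 2 ≤ C :=
    mul_le_of_le_one_right hC (pow_le_one₀ (norm_nonneg x) hx)
  have h4 := neg_abs_le (q 0)
  have h5 := le_abs_self (q 0)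
  simp only [sub_zero] at h1
  rw [abs_le]
  constructor <;> linarith

/-- The derivative of a multilinear form is Lipschitz on the unit ball of the product space, since
its second derivative is bounded there; the remainder bound follows from the mean value
inequality. -/
lemma hasQuadraticRemainder_diag {n : ℕ} (F : ContinuousMultilinearMap ℝ (fun _ : Fin n => X) ℝ) :
    ∃ C, 0 ≤ C ∧ HasQuadraticRemainder (fun x => F fun _ => x) C := by
  set C : ℝ := n.descFactorial 2 * ‖F‖ with hCdef
  have hC : 0 ≤ C := by positivity
  refine ⟨C, hC, fun z hz => ?_⟩
  have hsm : ContDiff ℝ 2 F := F.contDiff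
  have hsm' : ContDiff ℝ 1 (fderiv ℝ F) := hsm.fderiv_right (by norm_num)
  have hball : ∀ x ∈ Metric.closedBall (0 : Fin n → X) 1, ‖fderiv ℝ (fderiv ℝ F) x‖ ≤ C := by
    intro x hx
    rw [mem_closedBall_zero_iff] at hx
    rw [← norm_iteratedFDeriv_one, norm_iteratedFDeriv_fderiv]
    refine (F.norm_iteratedFDeriv_le 2 x).trans ?_
    rw [Fintype.card_fin]
    exact mul_le_of_le_one_right hC (pow_le_one₀ (norm_nonneg x) hx)
  have hdiag : ∀ x : X, ‖x‖ ≤ 1 → (fun _ : Fin n => x) ∈ Metric.closedBall (0 : Fin n → X) 1 := by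
    intro x hx
    rw [mem_closedBall_zero_iff]
    exact (pi_norm_const_le x).trans hx
  set Δ : X →L[ℝ] (Fin n → X) := ContinuousLinearMap.pi fun _ => ContinuousLinearMap.id ℝ X
  refine ⟨(fderiv ℝ F (Δ z)).comp Δ, fun z' hz' => ?_⟩
  have hseg : segment ℝ (Δ z) (Δ z') ⊆ Metric.closedBall (0 : Fin n → X) 1 :=
    (convex_closedBall _ _).segment_subset (hdiag z hz) (hdiag z' hz')
  have hsub : ‖Δ z' - Δ z‖ ≤ ‖z' - z‖ := by
    rw [← map_sub]; exact pi_norm_const_le (z' - z)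
  have key : ‖F (Δ z') - F (Δ z) - fderiv ℝ F (Δ z) (Δ z' - Δ z)‖
      ≤ C * ‖Δ z' - Δ z‖ * ‖Δ z' - Δ z‖ := by
    refine (convex_segment (Δ z) (Δ z')).norm_image_sub_le_of_norm_fderiv_le' (𝕜 := ℝ)
      (fun x _ => hsm.differentiable (by norm_num) x) (fun x hx => ?_)
      (left_mem_segment _ _ _) (right_mem_segment _ _ _)
    refine ((convex_closedBall (0 : Fin n → X) 1).norm_image_sub_le_of_norm_fderiv_le (𝕜 := ℝ)
      (fun x _ => hsm'.differentiable (by norm_num) x) hball (hdiag z hz) (hseg hx)).trans ?_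
    gcongr
    obtain ⟨t, ht, rfl⟩ := (segment_eq_image' ℝ (Δ z) (Δ z')) ▸ hx
    change ‖Δ z + t • (Δ z' - Δ z) - Δ z‖ ≤ _
    rw [add_sub_cancel_left, norm_smul, Real.norm_of_nonneg ht.1]
    exact mul_le_of_le_one_left (norm_nonneg _) ht.2
  have hΔ : (fderiv ℝ F (Δ z)).comp Δ (z' - z) = fderiv ℝ F (Δ z) (Δ z' - Δ z) := by
    rw [ContinuousLinearMap.comp_apply, map_sub Δ]
  rw [hΔ]
  calc _ ≤ C * ‖Δ z' - Δ z‖ * ‖Δ z' - Δ z‖ := key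
    _ ≤ C * ‖z' - z‖ * ‖z' - z‖ := by gcongr
    _ = C * ‖z' - z‖ ^ 2 := by ring

lemma IsScalarPoly.hasQuadraticRemainder {p : X → ℝ} (hp : IsScalarPoly p) :
    ∃ C, 0 ≤ C ∧ HasQuadraticRemainder p C := by
  obtain ⟨N, c, F, hF⟩ := hp
  obtain rfl : p = fun x => c + ∑ n ∈ Finset.Icc 1 N, F n (fun _ => x) := funext hF
  have key : ∀ s : Finset ℕ, ∃ C, 0 ≤ C ∧
      HasQuadraticRemainder (fun x => ∑ n ∈ s, F n (fun _ => x)) C := by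
    intro s
    induction s using Finset.induction_on with
    | empty => exact ⟨0, le_rfl, by simpa using hasQuadraticRemainder_const (X := X) 0⟩
    | insert a s ha ih =>
      obtain ⟨C, hC, h⟩ := ih
      obtain ⟨D, hD, h'⟩ := hasQuadraticRemainder_diag (F a)
      refine ⟨D + C, add_nonneg hD hC, ?_⟩
      simp only [Finset.sum_insert ha]
      exact h'.add h
  obtain ⟨C, hC, h⟩ := key (Finset.Icc 1 N)
  exact ⟨0 + C, by simpa using hC, (hasQuadraticRemainder_const c).add h⟩

/-! ### Slices of the unit ball -/

/-- The geometric form of the Daugavet property for a normalized functional `g` and a nonzero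
direction `w`. -/
lemma exists_slice_of_norm_one
    (hDP : ∀ (f : X →L[ℝ] ℝ) (y₀ : X),
      ‖ContinuousLinearMap.id ℝ X + f.smulRight y₀‖ = 1 + ‖f‖ * ‖y₀‖)
    (g : X →L[ℝ] ℝ) (hg : ‖g‖ = 1) (w : X) (hw : w ≠ 0) {δ : ℝ} (hδ : 0 < δ) :
    ∃ x : X, ‖x‖ ≤ 1 ∧ 1 - δ ≤ g x ∧ 1 + ‖w‖ - δ ≤ ‖x + w‖ := by
  have hW : 0 < ‖w‖ := norm_pos_iff.2 hw
  set η : ℝ := min (δ / 2) (δ * ‖w‖) with hη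
  have hη0 : 0 < η := lt_min (by positivity) (by positivity)
  have h := hDP g w
  rw [hg, one_mul] at h
  have hlt : 1 + ‖w‖ - η < ‖ContinuousLinearMap.id ℝ X + g.smulRight w‖ := by linarith
  obtain ⟨x, hx, hxw⟩ := ContinuousLinearMap.exists_lt_apply_of_lt_opNorm _ hlt
  have hxw' : 1 + ‖w‖ - η < ‖x + g x • w‖ := by simpa using hxw
  -- Replacing `x` by `-x` if necessary makes `g x` nonnegative.
  obtain ⟨x, hx, hxw, hgx⟩ : ∃ x : X, ‖x‖ < 1 ∧ 1 + ‖w‖ - η < ‖x + g x • w‖ ∧ 0 ≤ g x := by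
    rcases le_total 0 (g x) with h0 | h0
    · exact ⟨x, hx, hxw', h0⟩
    · refine ⟨-x, by simpa using hx, ?_, by simpa using h0⟩
      rw [map_neg, neg_smul, ← neg_add, norm_neg]
      exact hxw'
  have hgx1 : g x ≤ 1 := by
    have := (le_abs_self (g x)).trans (g.le_opNorm x)
    rw [hg, one_mul] at this
    linarith
  have h1 : ‖x + g x • w‖ ≤ ‖x‖ + g x * ‖w‖ := by
    refine (norm_add_le _ _).trans ?_
    rw [norm_smul, Real.norm_of_nonneg hgx]
  have h2 : (1 - g x) * ‖w‖ ≤ η := by nlinarith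
  refine ⟨x, hx.le, ?_, ?_⟩
  · have h3 : (1 - g x) * ‖w‖ ≤ δ * ‖w‖ := h2.trans (min_le_right _ _)
    have := le_of_mul_le_mul_right h3 hW
    linarith
  · have h3 : ‖x + g x • w‖ ≤ ‖x + w‖ + (1 - g x) * ‖w‖ := by
      have : x + g x • w = (x + w) - (1 - g x) • w := by module
      rw [this]
      refine (norm_sub_le _ _).trans ?_
      rw [norm_smul, Real.norm_of_nonneg (by linarith : 0 ≤ 1 - g x)]
    have h4 : η ≤ δ / 2 := min_le_left _ _
    linarith

/-- Every slice of the unit ball contains points that are almost aligned with a prescribed `w`;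
the slice is described by a functional and a point `x₀` of the ball. -/
lemma exists_mem_slice [Nontrivial X]
    (hDP : ∀ (f : X →L[ℝ] ℝ) (y₀ : X),
      ‖ContinuousLinearMap.id ℝ X + f.smulRight y₀‖ = 1 + ‖f‖ * ‖y₀‖)
    (f : X →L[ℝ] ℝ) (x₀ : X) (hx₀ : ‖x₀‖ ≤ 1) (w : X) {δ : ℝ} (hδ : 0 < δ) :
    ∃ x : X, ‖x‖ ≤ 1 ∧ f x₀ - δ ≤ f x ∧ ‖w‖ + 1 - δ ≤ ‖x + w‖ := by
  -- For `w = 0`, alignment with any nonzero vector forces `‖x‖` to be almost `1`.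
  wlog hw : w ≠ 0 generalizing w
  · obtain ⟨v, hv⟩ := exists_ne (0 : X)
    obtain ⟨x, hx, hfx, hxv⟩ := this v hv
    obtain rfl : w = 0 := not_not.1 hw
    refine ⟨x, hx, hfx, ?_⟩
    have := norm_add_le x v
    simp only [norm_zero, add_zero]
    linarith
  by_cases hf : f = 0
  · obtain ⟨g, hg, -⟩ := exists_dual_vector' ℝ (0 : X)
    obtain ⟨x, hx, -, hxw⟩ := exists_slice_of_norm_one hDP g hg w hw hδ
    exact ⟨x, hx, by simp [hf, hδ.le], by linarith⟩
  · have hL : 0 < ‖f‖ := norm_pos_iff.2 hf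
    have hg : ‖‖f‖⁻¹ • f‖ = 1 := by
      rw [norm_smul, norm_inv, norm_norm, inv_mul_cancel₀ hL.ne']
    obtain ⟨x, hx, hgx, hxw⟩ := exists_slice_of_norm_one hDP _ hg w hw
      (lt_min hδ (div_pos hδ hL) : 0 < min δ (δ / ‖f‖))
    have h1 : min δ (δ / ‖f‖) ≤ δ := min_le_left _ _
    have h2 : 1 - δ / ‖f‖ ≤ ‖f‖⁻¹ * f x := by
      have := min_le_right δ (δ / ‖f‖)
      have h3 : (‖f‖⁻¹ • f) x = ‖f‖⁻¹ * f x := by simp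
      rw [← h3]; linarith
    have h3 : f x₀ ≤ ‖f‖ := (le_abs_self _).trans
      ((f.le_opNorm x₀).trans (mul_le_of_le_one_right hL.le hx₀))
    refine ⟨x, hx, ?_, by linarith⟩
    have h4 := mul_le_mul_of_nonneg_left h2 hL.le
    have h5 : ‖f‖ * (1 - δ / ‖f‖) = ‖f‖ - δ := by field_simp
    have h6 : ‖f‖ * (‖f‖⁻¹ * f x) = f x := by field_simp
    linarith

/-! ### Averages of almost aligned points -/

/-- The averaging construction: near any value of `q` on the unit ball there is a value attained at
an average of points that are successively almost aligned with `y`. -/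
lemma exists_almost_aligned [Nontrivial X]
    (hDP : ∀ (f : X →L[ℝ] ℝ) (y₀ : X),
      ‖ContinuousLinearMap.id ℝ X + f.smulRight y₀‖ = 1 + ‖f‖ * ‖y₀‖)
    {q : X → ℝ} {C : ℝ} (hC : 0 ≤ C) (hq : HasQuadraticRemainder q C)
    (x₀ : X) (hx₀ : ‖x₀‖ ≤ 1) (y : X) {ε : ℝ} (hε : 0 < ε) :
    ∃ z : X, ‖z‖ ≤ 1 ∧ q x₀ - ε ≤ q z ∧
      ∃ g : X →L[ℝ] ℝ, ‖g‖ ≤ 1 ∧ 1 - ε ≤ g z ∧ ‖y‖ - ε ≤ g y := by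
  -- `n` absorbs the quadratic errors; `δ` then bounds the error allowed at each of the `n` steps.
  obtain ⟨m, hm⟩ := exists_nat_gt (8 * C / ε)
  set n : ℝ := m + 1 with hn
  have hn1 : 1 ≤ n := by simp [hn]
  have hn0 : 0 < n := by linarith
  have hCn : 4 * C / n ≤ ε / 2 := by
    rw [div_lt_iff₀ hε] at hm
    rw [div_le_iff₀ hn0, hn]
    nlinarith
  set δ : ℝ := ε / (2 * n) with hδdef
  have hδ : 0 < δ := by positivity
  have hnδ : n * δ = ε / 2 := by rw [hδdef]; field_simp
  have hδε : δ ≤ ε / 2 := by nlinarith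
  -- `s` is the sum of the first `i` chosen points.
  have step : ∀ i : ℕ, i ≤ m + 1 → ∃ s : X, ‖s‖ ≤ i ∧ ‖y‖ + i - i * δ ≤ ‖y + s‖ ∧
      q x₀ - i * ((δ + 4 * C / n) / n) ≤ q (n⁻¹ • (s + (n - i) • x₀)) := by
    intro i
    induction i with
    | zero =>
      intro _
      refine ⟨0, by simp, by simp, ?_⟩
      simp [smul_smul, inv_mul_cancel₀ hn0.ne']
    | succ i ih =>
      intro hi
      obtain ⟨s, hs, hys, hqs⟩ := ih (by omega)
      have hi' : (i : ℝ) + 1 ≤ n := by rw [hn]; exact_mod_cast hi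
      have hball : ∀ (t : X) (j : ℝ), j ≤ n → ‖t‖ ≤ j → ‖n⁻¹ • (t + (n - j) • x₀)‖ ≤ 1 := by
        intro t j hj ht
        rw [norm_smul, norm_inv, Real.norm_of_nonneg hn0.le, inv_mul_le_iff₀ hn0, mul_one]
        refine (norm_add_le _ _).trans ?_
        rw [norm_smul, Real.norm_of_nonneg (by linarith : 0 ≤ n - j)]
        have := mul_le_of_le_one_right (by linarith : 0 ≤ n - j) hx₀
        linarith
      set z : X := n⁻¹ • (s + (n - i) • x₀) with hz
      obtain ⟨f, hf⟩ := hq z (hball s i (by linarith) hs)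
      obtain ⟨x, hx, hfx, hxw⟩ := exists_mem_slice hDP f x₀ hx₀ (y + s) hδ
      have hs' : ‖s + x‖ ≤ i + 1 := (norm_add_le _ _).trans (by linarith)
      refine ⟨s + x, by exact_mod_cast hs', ?_, ?_⟩
      · rw [← add_assoc, add_comm (y + s) x]
        push_cast
        linarith
      · push_cast
        set z' : X := n⁻¹ • (s + x + (n - (i + 1)) • x₀) with hz'
        have hdiff : z' - z = n⁻¹ • (x - x₀) := by rw [hz, hz']; module
        have h1 := (abs_le.1 (hf z' (hball (s + x) (i + 1) hi' hs'))).1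
        have h2 : ‖z' - z‖ ≤ 2 / n := by
          rw [hdiff, norm_smul, norm_inv, Real.norm_of_nonneg hn0.le, inv_mul_eq_div]
          gcongr
          exact (norm_sub_le _ _).trans (by linarith)
        have h3 : C * ‖z' - z‖ ^ 2 ≤ 4 * C / n / n := by
          calc C * ‖z' - z‖ ^ 2 ≤ C * (2 / n) ^ 2 := by gcongr
            _ = 4 * C / n / n := by field_simp; norm_num
        have h4 : -(δ / n) ≤ f (z' - z) := by
          rw [hdiff, map_smul, map_sub, smul_eq_mul, inv_mul_eq_div, ← neg_div]
          gcongr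
          linarith
        have h5 : (δ + 4 * C / n) / n = δ / n + 4 * C / n / n := add_div _ _ _
        rw [h5] at hqs ⊢
        linarith
  obtain ⟨s, hs, hys, hqs⟩ := step (m + 1) le_rfl
  have hcast : ((m + 1 : ℕ) : ℝ) = n := by rw [hn]; push_cast; rfl
  rw [hcast] at hs hys hqs
  rw [sub_self, zero_smul, add_zero] at hqs
  obtain ⟨g, hg, hgs⟩ := exists_dual_vector'' ℝ (y + s)
  have hle : ∀ v : X, g v ≤ ‖v‖ := fun v => (le_abs_self _).trans
    ((g.le_opNorm v).trans (mul_le_of_le_one_left (norm_nonneg v) hg))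
  have hgs' : g y + g s = ‖y + s‖ := by rw [← map_add]; exact hgs
  have hgy := hle y
  have hgs2 := hle s
  refine ⟨n⁻¹ • s, ?_, ?_, g, hg, ?_, by linarith⟩
  · rw [norm_smul, norm_inv, Real.norm_of_nonneg hn0.le, inv_mul_le_iff₀ hn0, mul_one]
    exact hs
  · have : n * ((δ + 4 * C / n) / n) = δ + 4 * C / n := by field_simp
    linarith
  · rw [map_smul, smul_eq_mul, inv_mul_eq_div, le_div_iff₀ hn0]
    nlinarith

end

/-! ### The polynomial Daugavet equation -/

/-- the Daugavet property implies the polynomial Daugavet property: every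
rank-one continuous polynomial `x ↦ p x • y₀` satisfies the Daugavet equation. -/
theorem daugavet_implies_polynomial_daugavet
    {X : Type*} [NormedAddCommGroup X] [NormedSpace ℝ X] [CompleteSpace X]
    (hDP : ∀ (f : X →L[ℝ] ℝ) (y₀ : X),
      ‖ContinuousLinearMap.id ℝ X + f.smulRight y₀‖ = 1 + ‖f‖ * ‖y₀‖) :
    ∀ (p : X → ℝ), IsScalarPoly p → ∀ (y₀ : X),
      (⨆ x : {x : X // ‖x‖ ≤ 1}, ‖(x : X) + p x • y₀‖) =
        1 + (⨆ x : {x : X // ‖x‖ ≤ 1}, |p x|) * ‖y₀‖ := by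
  intro p hp y₀
  -- On the zero space the identity has norm `0`, contradicting the Daugavet equation for `f = 0`.
  have hnt : Nontrivial X := by
    by_contra h
    rw [not_nontrivial_iff_subsingleton] at h
    have h1 := hDP 0 0
    rw [Subsingleton.elim (ContinuousLinearMap.id ℝ X + _) 0] at h1
    simp at h1
  obtain ⟨C, hC, hq⟩ := hp.hasQuadraticRemainder
  obtain ⟨M, hM⟩ := hq.exists_bound hC
  have : Nonempty {x : X // ‖x‖ ≤ 1} := ⟨⟨0, by simp⟩⟩
  have hb1 : BddAbove (Set.range fun x : {x : X // ‖x‖ ≤ 1} => |p x|) :=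
    ⟨M, by rintro _ ⟨x, rfl⟩; exact hM x x.2⟩
  have hpt : ∀ x : {x : X // ‖x‖ ≤ 1}, ‖(x : X) + p x • y₀‖ ≤ 1 + |p x| * ‖y₀‖ := by
    intro x
    refine (norm_add_le _ _).trans ?_
    rw [norm_smul, Real.norm_eq_abs]
    linarith [x.2]
  have hb2 : BddAbove (Set.range fun x : {x : X // ‖x‖ ≤ 1} => ‖(x : X) + p x • y₀‖) := by
    refine ⟨1 + M * ‖y₀‖, ?_⟩
    rintro _ ⟨x, rfl⟩
    refine (hpt x).trans ?_
    gcongr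
    exact hM x x.2
  apply le_antisymm
  · refine ciSup_le fun x => (hpt x).trans ?_
    gcongr
    exact le_ciSup hb1 x
  · set S := ⨆ x : {x : X // ‖x‖ ≤ 1}, ‖(x : X) + p x • y₀‖ with hS
    have key : ∀ (q : X → ℝ) (y : X), HasQuadraticRemainder q C → ‖y‖ = ‖y₀‖ →
        (∀ x, q x • y = p x • y₀) → ∀ x₀ : X, ‖x₀‖ ≤ 1 → 0 ≤ q x₀ → 1 + q x₀ * ‖y₀‖ ≤ S := by
      intro q y hq hy hqy x₀ hx₀ h0
      obtain ⟨B, hB⟩ := hq.exists_bound hC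
      have hB0 : 0 ≤ B := (abs_nonneg _).trans (hB x₀ hx₀)
      set K : ℝ := 1 + q x₀ + ‖y₀‖ + B with hK
      have hK0 : 0 < K := by positivity
      refine le_of_forall_pos_le_add fun ε hε => ?_
      obtain ⟨z, hz, hqz, g, hg, hgz, hgy⟩ :=
        exists_almost_aligned hDP hC hq x₀ hx₀ y (div_pos hε hK0)
      set η := ε / K with hη
      have hη0 : 0 < η := div_pos hε hK0
      have hηK : η * K = ε := div_mul_cancel₀ _ hK0.ne'
      have hle : ∀ v : X, g v ≤ ‖v‖ := fun v => (le_abs_self _).trans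
        ((g.le_opNorm v).trans (mul_le_of_le_one_left (norm_nonneg v) hg))
      have h1 : g z + q z * g y ≤ S := by
        have h2 := hle (z + q z • y)
        rw [map_add, map_smul, smul_eq_mul, hqy] at h2
        exact h2.trans (le_ciSup hb2 ⟨z, hz⟩)
      have hgy1 : g y ≤ ‖y₀‖ := hy ▸ hle y
      rw [hy] at hgy
      have hqB := abs_le.1 (hB z hz)
      rcases le_total 0 (g y) with hpos | hneg
      · have h2 : (q x₀ - η) * g y ≤ q z * g y := by gcongr
        have h3 : q x₀ * (‖y₀‖ - η) ≤ q x₀ * g y := by gcongr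
        have h4 : η * g y ≤ η * ‖y₀‖ := by gcongr
        have h5 : 0 ≤ η * B := by positivity
        rw [hK] at hηK
        linarith
      · -- Here `‖y₀‖ ≤ η`, so all terms involving `y₀` are of order `η`.
        have h2 : B * g y ≤ q z * g y := mul_le_mul_of_nonpos_right hqB.2 hneg
        have h3 : B * (-η) ≤ B * g y := by
          gcongr
          linarith [norm_nonneg y₀]
        have h4 : q x₀ * ‖y₀‖ ≤ q x₀ * η := by
          gcongr
          linarith
        have h5 : 0 ≤ η * ‖y₀‖ := by positivity
        rw [hK] at hηK
        linarith
    have hall : ∀ x : {x : X // ‖x‖ ≤ 1}, |p x| * ‖y₀‖ ≤ S - 1 := by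
      rintro ⟨x, hx⟩
      rcases le_total 0 (p x) with h | h
      · have := key p y₀ hq rfl (fun _ => rfl) x hx h
        simp only [abs_of_nonneg h]
        linarith
      · have := key (fun x => -p x) (-y₀) hq.neg (norm_neg _) (fun x => by simp) x hx
          (by simpa using h)
        simp only [abs_of_nonpos h]
        linarith
    rw [Real.iSup_mul_of_nonneg (norm_nonneg _)]
    linarith [ciSup_le hall]
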